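/- Let u be a smooth strictly plurisubharmonic function on an open set Ω ⊆ ℂ^n satisfying det(u_{ij̄}) = e^{(n+1)u} on Ω, set A = (u_{ij̄}), B = (u_{ij}), M = A − B·(Ā)⁻¹·B̄, and for a fixed vector s ∈ ℂ^n define the real-valued function m = Σ_{p,q} M_{pq̄} s^p \overline{s^q} on Ω. Then u^{ij̄} ∂_i∂_{j̄} m ≤ (n+1)·m at every point of Ω (summation over i, j). -/

import Mathlib

open Complex Matrix
open scoped ComplexOrder

noncomputable section

/-- Wirtinger derivative `∂/∂z_j` of a complex-valued function on `ℂⁿ`. -/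
def wdz {n : ℕ} (f : (Fin n → ℂ) → ℂ) (j : Fin n) (z : Fin n → ℂ) : ℂ :=
  (fderiv ℝ f z (Pi.single j 1) - Complex.I * fderiv ℝ f z (Pi.single j Complex.I)) / 2

/-- Wirtinger derivative `∂/∂z̄_j` of a complex-valued function on `ℂⁿ`. -/
def wdzbar {n : ℕ} (f : (Fin n → ℂ) → ℂ) (j : Fin n) (z : Fin n → ℂ) : ℂ :=
  (fderiv ℝ f z (Pi.single j 1) + Complex.I * fderiv ℝ f z (Pi.single j Complex.I)) / 2

/-- A real-valued function on `ℂⁿ` viewed as complex-valued. -/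
def cplx {n : ℕ} (u : (Fin n → ℂ) → ℝ) : (Fin n → ℂ) → ℂ := fun z => (u z : ℂ)

/-- The complex Hessian `A = (u_{ij̄}) = (∂_i ∂_{j̄} u)`. -/
def hessA {n : ℕ} (u : (Fin n → ℂ) → ℝ) (z : Fin n → ℂ) : Matrix (Fin n) (Fin n) ℂ :=
  Matrix.of fun i j => wdz (wdzbar (cplx u) j) i z

/-- The matrix `B = (u_{ij}) = (∂_i ∂_j u)`. -/
def hessB {n : ℕ} (u : (Fin n → ℂ) → ℝ) (z : Fin n → ℂ) : Matrix (Fin n) (Fin n) ℂ :=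
  Matrix.of fun i j => wdz (wdz (cplx u) j) i z

/-- `u^{ij̄}`, the entries of the inverse of the complex Hessian, with the convention
`∑_j u^{ij̄} u_{kj̄} = δ_{ik}`. -/
def uInv {n : ℕ} (u : (Fin n → ℂ) → ℝ) (z : Fin n → ℂ) (i j : Fin n) : ℂ :=
  (hessA u z)⁻¹ j i

/-- Entrywise Wirtinger derivative `∂_i` of a matrix-valued function. -/
def mwdz {n : ℕ} (F : (Fin n → ℂ) → Matrix (Fin n) (Fin n) ℂ) (i : Fin n) (z : Fin n → ℂ) :
    Matrix (Fin n) (Fin n) ℂ :=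
  Matrix.of fun p q => wdz (fun w => F w p q) i z

/-- Entrywise Wirtinger derivative `∂_{j̄}` of a matrix-valued function. -/
def mwdzbar {n : ℕ} (F : (Fin n → ℂ) → Matrix (Fin n) (Fin n) ℂ) (j : Fin n) (z : Fin n → ℂ) :
    Matrix (Fin n) (Fin n) ℂ :=
  Matrix.of fun p q => wdzbar (fun w => F w p q) j z

/-- Entrywise complex conjugate of a matrix. -/
def mconj {n : ℕ} (M : Matrix (Fin n) (Fin n) ℂ) : Matrix (Fin n) (Fin n) ℂ :=
  M.map (starRingEnd ℂ)

/-- The real coordinate directions `x_1, …, x_n, y_1, …, y_n` of `ℂⁿ`. -/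
def realDir {n : ℕ} : (Fin n ⊕ Fin n) → (Fin n → ℂ)
  | Sum.inl j => Pi.single j 1
  | Sum.inr j => Pi.single j Complex.I

/-- The real Hessian of `u : ℂⁿ → ℝ` in the coordinates `(x_1,…,x_n,y_1,…,y_n)`. -/
def realHess {n : ℕ} (u : (Fin n → ℂ) → ℝ) (z : Fin n → ℂ) :
    Matrix (Fin n ⊕ Fin n) (Fin n ⊕ Fin n) ℝ :=
  Matrix.of fun a b => fderiv ℝ (fun w => fderiv ℝ u w (realDir b)) z (realDir a)

/- Differentiating `log det A = c u` along any two of the directions `∂_i`, `∂_{j̄}` shows that the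
operator `L = u^{ij̄} ∂_i ∂_{j̄}` sends each second derivative of `u` to `c` times itself plus an
expression quadratic in third derivatives. When `L` is applied to the Schur complement
`M = A - B Ā⁻¹ B̄`, these expressions combine with the first-order cross terms and everything
cancels except a negative semidefinite matrix: with the covariant derivatives
`E_i = ∂_i B - B Ā⁻¹ ∂_i Ā`,
`L M = c M - ∑ u^{ij̄} E_i Ā⁻¹ E_jᴴ`.
Only the product rule, the commutation of derivatives and complex conjugation enter, so this is an
identity in any commutative `*`-ring with commuting derivations, here the ring of smooth functions
on `Ω`. -/

section Contraction

variable {ι κ S V : Type*} [Fintype ι] [Fintype κ] [CommSemiring S] [AddCommMonoid V] [Module S V]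

/-- The full contraction `∑ i j, P i j • X i j` of a doubly indexed family `X` of vectors against a
matrix `P` of scalars. It serves both for the operator `u^{ij̄} ∂_i ∂_{j̄}`, where the vectors are
themselves matrices, and for the Hermitian form `∑ X p q s^p \bar{s^q}`. -/
def contraction (P : Matrix ι κ S) : Matrix ι κ V →ₗ[S] V where
  toFun X := ∑ i, ∑ j, P i j • X i j
  map_add' X Y := by simp only [Matrix.add_apply, smul_add, Finset.sum_add_distrib]
  map_smul' c X := by
    simp only [Matrix.smul_apply, smul_comm (P _ _) c, Finset.smul_sum, RingHom.id_apply]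

lemma contraction_apply (P : Matrix ι κ S) (X : Matrix ι κ V) :
    contraction P X = ∑ i, ∑ j, P i j • X i j := rfl

lemma map_contraction {W F : Type*} [AddCommMonoid W] [Module S W] [FunLike F V W]
    [LinearMapClass F S V W] (φ : F) (P : Matrix ι κ S) (X : Matrix ι κ V) :
    φ (contraction P X) = contraction P (X.map φ) := by
  simp only [contraction_apply, map_sum, map_smul, map_apply]

lemma trace_mul_eq_contraction (M : Matrix ι κ S) (N : Matrix κ ι S) :
    (M * N).trace = contraction Mᵀ N := by
  simp only [trace, diag_apply, mul_apply, contraction_apply, transpose_apply, smul_eq_mul]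
  exact Finset.sum_comm

lemma contraction_entry {l m : Type*} (P : Matrix ι κ S) (X : Matrix ι κ (Matrix l m V))
    (p : l) (q : m) : contraction P X p q = contraction P (X.map fun Y => Y p q) :=
  map_contraction (entryLinearMap S V p q) P X

lemma contraction_map_ringHom {T F l m : Type*} [CommSemiring T] [FunLike F S T]
    [RingHomClass F S T] (φ : F)
    (P : Matrix ι κ S) (X : Matrix ι κ (Matrix l m S)) :
    (contraction P X).map φ = contraction (P.map φ) (X.map fun Y => Y.map φ) := by
  ext p q
  rw [map_apply, contraction_entry, contraction_entry]
  simp only [contraction_apply, map_sum, smul_eq_mul, map_mul, map_apply]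

lemma mul_contraction {l m o : Type*} [Fintype m] {R : Type*} [CommSemiring R]
    (P : Matrix ι κ R) (N : Matrix l m R) (X : Matrix ι κ (Matrix m o R)) :
    N * contraction P X = contraction P (of fun i j => N * X i j) :=
  map_contraction (mulLeftLinearMap o R N) P X

lemma contraction_mul {l m o : Type*} [Fintype m] {R : Type*} [CommSemiring R]
    (P : Matrix ι κ R) (X : Matrix ι κ (Matrix l m R)) (N : Matrix m o R) :
    contraction P X * N = contraction P (of fun i j => X i j * N) :=
  map_contraction (mulRightLinearMap l R N) P X

end Contraction

section PosSemidef

variable {ι κ m : Type*} [Fintype ι]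

/- With `E` regarded as one block row indexed by `ι × κ`, the contraction is `E (P ⊗ Q) Eᴴ`. -/
lemma posSemidef_contraction_conj [Fintype κ] [Finite m] {P : Matrix ι ι ℂ} {Q : Matrix κ κ ℂ}
    (hP : P.PosSemidef) (hQ : Q.PosSemidef) (E : ι → Matrix m κ ℂ) :
    (contraction P (of fun i j => E i * Q * (E j)ᴴ)).PosSemidef := by
  classical
  let block : Matrix m (ι × κ) ℂ := of fun p x => E x.1 p x.2
  suffices contraction P (of fun i j => E i * Q * (E j)ᴴ)
      = block * kroneckerMap (· * ·) P Q * blockᴴ by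
    rw [this]
    exact (hP.kronecker hQ).mul_mul_conjTranspose_same block
  ext p q
  simp only [contraction_entry, contraction_apply, map_apply, of_apply, mul_apply, block,
    Fintype.sum_prod_type, kroneckerMap_apply, conjTranspose_apply, smul_eq_mul,
    Finset.sum_mul, Finset.mul_sum]
  rw [Finset.sum_comm]
  refine Finset.sum_congr rfl fun j _ => ?_
  rw [Finset.sum_comm]
  refine Finset.sum_congr rfl fun l _ => Finset.sum_congr rfl fun i _ =>
    Finset.sum_congr rfl fun k _ => ?_
  ring

lemma contraction_vecMulVec_star_nonneg [Fintype m] {Q : Matrix m m ℂ} (hQ : Q.PosSemidef)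
    (s : m → ℂ) :
    0 ≤ contraction (vecMulVec s (star s)) Q := by
  refine (hQ.dotProduct_mulVec_nonneg (star s)).trans_eq ?_
  simp only [contraction_apply, vecMulVec_apply, dotProduct, mulVec, Finset.mul_sum, star_star,
    smul_eq_mul]
  exact Finset.sum_congr rfl fun p _ => Finset.sum_congr rfl fun q _ => by ring

end PosSemidef

lemma map_inv_of_isUnit_det {m R S F : Type*} [Fintype m] [DecidableEq m] [CommRing R] [CommRing S]
    [FunLike F R S] [RingHomClass F R S] (φ : F) {G : Matrix m m R} (hG : IsUnit G.det) :
    G⁻¹.map φ = (G.map φ)⁻¹ :=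
  (inv_eq_left_inv <| by
    rw [← Matrix.map_mul, nonsing_inv_mul G hG, Matrix.map_one φ (map_zero φ) (map_one φ)]).symm

section MatrixDerivation

variable {k R l m n o : Type*} [CommRing k] [CommRing R] [Algebra k R] (D D' : Derivation k R R)

lemma map_derivation_sub (M N : Matrix l m R) : (M - N).map D = M.map D - N.map D :=
  Matrix.map_sub D (map_sub D) M N

lemma map_derivation_mul [Fintype m] (M : Matrix l m R) (N : Matrix m o R) :
    (M * N).map D = M.map D * N + M * N.map D := by
  ext p q
  simp only [map_apply, Matrix.add_apply, mul_apply, map_sum, Derivation.leibniz, smul_eq_mul,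
    ← Finset.sum_add_distrib]
  exact Finset.sum_congr rfl fun i _ => by ring

lemma derivation_prod {ι : Type*} [DecidableEq ι] (s : Finset ι) (f : ι → R) :
    D (∏ i ∈ s, f i) = ∑ i ∈ s, (∏ j ∈ s.erase i, f j) * D (f i) := by
  induction s using Finset.induction_on with
  | empty => simp only [Finset.prod_empty, Derivation.map_one_eq_zero, Finset.sum_empty]
  | insert a s ha ih =>
    have erase_other : ∀ i ∈ s, (insert a s).erase i = insert a (s.erase i) := fun i hi =>
      Finset.erase_insert_of_ne (ne_of_mem_of_not_mem hi ha).symm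
    rw [Finset.prod_insert ha, Derivation.leibniz, ih, Finset.sum_insert ha,
      Finset.erase_insert ha, smul_eq_mul, smul_eq_mul, Finset.mul_sum, add_comm]
    refine congrArg _ (Finset.sum_congr rfl fun i hi => ?_)
    rw [erase_other i hi, Finset.prod_insert (fun h => ha (Finset.mem_of_mem_erase h)), mul_assoc]

variable [Fintype n] [DecidableEq n] {G : Matrix n n R}

lemma trace_adjugate_mul (M N : Matrix n n R) :
    (M.adjugate * N).trace = ∑ i, (M.updateCol i fun p => N p i).det := by
  refine Finset.sum_congr rfl fun i _ => ?_
  rw [← cramer_apply, cramer_eq_adjugate_mulVec]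
  rfl

lemma derivation_det (M : Matrix n n R) : D M.det = (M.adjugate * M.map D).trace := by
  simp only [trace_adjugate_mul, det_apply, map_sum]
  rw [Finset.sum_comm]
  refine Finset.sum_congr rfl fun σ _ => ?_
  rw [Units.smul_def, map_zsmul, derivation_prod, ← Finset.smul_sum]
  refine congrArg _ (Finset.sum_congr rfl fun i _ => ?_)
  rw [← Finset.prod_erase_mul _ _ (Finset.mem_univ i), updateCol_self]
  refine congrArg (· * _) (Finset.prod_congr rfl fun j hj => ?_)
  rw [updateCol_ne (Finset.ne_of_mem_erase hj)]

lemma map_derivation_inv (hG : IsUnit G.det) : G⁻¹.map D = -(G⁻¹ * G.map D * G⁻¹) := by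
  have product_rule : G.map D * G⁻¹ + G * G⁻¹.map D = 0 := by
    rw [← map_derivation_mul, mul_nonsing_inv G hG]
    ext p q
    by_cases h : p = q <;> simp [one_apply, h]
  calc G⁻¹.map D = G⁻¹ * (G * G⁻¹.map D) := (nonsing_inv_mul_cancel_left _ _ hG).symm
    _ = -(G⁻¹ * G.map D * G⁻¹) := by
      rw [eq_neg_of_add_eq_zero_right product_rule, Matrix.mul_neg, Matrix.mul_assoc]

lemma map_derivation_mul_inv (hG : IsUnit G.det) (B : Matrix l n R) :
    (B * G⁻¹).map D = (B.map D - B * G⁻¹ * G.map D) * G⁻¹ := by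
  rw [map_derivation_mul, map_derivation_inv D hG, Matrix.sub_mul, Matrix.mul_neg,
    ← sub_eq_add_neg]
  simp only [Matrix.mul_assoc]

lemma map_derivation_inv_mul (hG : IsUnit G.det) (C : Matrix n m R) :
    (G⁻¹ * C).map D = G⁻¹ * (C.map D - G.map D * (G⁻¹ * C)) := by
  rw [map_derivation_mul, map_derivation_inv D hG, Matrix.mul_sub, Matrix.neg_mul,
    neg_add_eq_sub]
  simp only [Matrix.mul_assoc]

lemma map_derivation_schur (hG : IsUnit G.det) (A : Matrix l m R) (B : Matrix l n R)
    (C : Matrix n m R) :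
    (A - B * G⁻¹ * C).map D = A.map D - B.map D * (G⁻¹ * C) - B * G⁻¹ * C.map D
      + B * G⁻¹ * G.map D * (G⁻¹ * C) := by
  rw [map_derivation_sub, map_derivation_mul, map_derivation_mul_inv D hG]
  simp only [Matrix.sub_mul, Matrix.mul_assoc]
  abel

lemma map_derivation_map_derivation_schur (hG : IsUnit G.det) (A : Matrix l m R)
    (B : Matrix l n R) (C : Matrix n m R) :
    ((A - B * G⁻¹ * C).map D').map D =
      (A.map D').map D - (B.map D').map D * (G⁻¹ * C) - B * G⁻¹ * (C.map D').map D
        + B * G⁻¹ * (G.map D').map D * (G⁻¹ * C)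
      - (B.map D' - B * G⁻¹ * G.map D') * G⁻¹ * (C.map D - G.map D * (G⁻¹ * C))
      - (B.map D - B * G⁻¹ * G.map D) * G⁻¹ * (C.map D' - G.map D' * (G⁻¹ * C)) := by
  rw [map_derivation_schur D' hG, Matrix.map_add D (map_add D)]
  simp only [map_derivation_sub, map_derivation_mul _ _ (G⁻¹ * C),
    map_derivation_mul _ (B * G⁻¹), map_derivation_mul_inv D hG, map_derivation_inv_mul D hG]
  simp only [Matrix.sub_mul, Matrix.mul_sub, Matrix.add_mul, Matrix.mul_assoc]
  abel

end MatrixDerivation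

section CommutingDerivations

variable {k R κ ι : Type*} [CommRing k] [CommRing R] [Algebra k R] (D : κ → Derivation k R R)

/-- The matrix of second derivatives `D_{e p} D_{f q} U`. With `e` and `f` ranging over the
holomorphic and the antiholomorphic directions it is one of `A`, `B` and their conjugates. -/
def hess (e f : ι → κ) (U : R) : Matrix ι ι R :=
  of fun p q => D (e p) (D (f q) U)

variable {D} {e f : ι → κ} {U : R}

lemma hess_transpose (hD : ∀ a b F, D a (D b F) = D b (D a F)) :
    (hess D e f U)ᵀ = hess D f e U := by
  ext p q
  exact hD _ _ _

lemma hess_map_star [StarRing R] {eb fb : ι → κ}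
    (he : ∀ i F, star (D (e i) F) = D (eb i) (star F))
    (hf : ∀ i F, star (D (f i) F) = D (fb i) (star F)) :
    (hess D e f U).map star = hess D eb fb (star U) := by
  ext p q
  change star (D (e p) (D (f q) U)) = D (eb p) (D (fb q) (star U))
  rw [he, hf]

variable (D) [Fintype ι] [DecidableEq ι]

/-- The algebraic form of the equation `det (u_{ij̄}) = exp (c u)`: along every derivation `D a`,
the determinant has logarithmic derivative `c • D a U`. -/
structure IsKahlerEinsteinPotential (z zb : ι → κ) (c : k) (U : R) : Prop where
  isUnit_det : IsUnit (hess D z zb U).det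
  map_det (a : κ) : D a (hess D z zb U).det = c • ((hess D z zb U).det * D a U)

/-- The operator `u^{ij̄} ∂_i ∂_{j̄}`, applied entrywise to a matrix. The coefficients are written
as the entries of `Ā⁻¹`, the transpose of `A⁻¹`. -/
def kahlerLaplacian {l m : Type*} (z zb : ι → κ) (U : R) (X : Matrix l m R) : Matrix l m R :=
  contraction (hess D zb z U)⁻¹ (of fun i j => (X.map (D (zb j))).map (D (z i)))

/-- The matrix `M = A - B Ā⁻¹ B̄`, the Schur complement of the full complex Hessian. -/
def hessSchur (z zb : ι → κ) (U : R) : Matrix ι ι R :=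
  hess D z zb U - hess D z z U * (hess D zb z U)⁻¹ * hess D zb zb U

/-- The derivative `D_a B - B Ā⁻¹ D_a Ā` of the rows of `B`, covariant for the connection form
`Ā⁻¹ D_a Ā`. For `D_a = ∂_i` this form is the Chern connection of the metric `u_{ij̄}`, and the
`(p, q)` entry is `u_{pqi} - u_{pk} Γ^k_{iq}`. -/
def covDeriv (z zb : ι → κ) (U : R) (a : κ) : Matrix ι ι R :=
  (hess D z z U).map (D a) - hess D z z U * (hess D zb z U)⁻¹ * (hess D zb z U).map (D a)

variable {D} {z zb : ι → κ} {c : k}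

lemma hess_inv_transpose (hD : ∀ a b F, D a (D b F) = D b (D a F)) :
    (hess D e f U)⁻¹ᵀ = (hess D f e U)⁻¹ := by
  rw [transpose_nonsing_inv, hess_transpose hD]

lemma isUnit_det_hess_swap (hD : ∀ a b F, D a (D b F) = D b (D a F))
    (h : IsUnit (hess D e f U).det) : IsUnit (hess D f e U).det := by
  rwa [← hess_transpose hD, det_transpose]

lemma covDeriv_transpose (hD : ∀ a b F, D a (D b F) = D b (D a F)) (a : κ) :
    (covDeriv D zb z U a)ᵀ = (hess D zb zb U).map (D a)
      - (hess D zb z U).map (D a) * ((hess D zb z U)⁻¹ * hess D zb zb U) := by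
  rw [covDeriv, transpose_sub, transpose_mul, transpose_mul, ← transpose_map, ← transpose_map,
    hess_inv_transpose hD, hess_transpose hD, hess_transpose hD]

/- The last two terms come from `∂_i` and `∂_{j̄}` hitting different factors of `B Ā⁻¹ B̄`. -/
lemma kahlerLaplacian_hessSchur_expand (hG : IsUnit (hess D zb z U).det)
    (hD : ∀ a b F, D a (D b F) = D b (D a F)) :
    kahlerLaplacian D z zb U (hessSchur D z zb U) =
      kahlerLaplacian D z zb U (hess D z zb U)
        - kahlerLaplacian D z zb U (hess D z z U) * ((hess D zb z U)⁻¹ * hess D zb zb U)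
        - hess D z z U * (hess D zb z U)⁻¹ * kahlerLaplacian D z zb U (hess D zb zb U)
        + hess D z z U * (hess D zb z U)⁻¹ * kahlerLaplacian D z zb U (hess D zb z U) *
          ((hess D zb z U)⁻¹ * hess D zb zb U)
      - contraction (hess D zb z U)⁻¹ (of fun i j =>
        covDeriv D z zb U (zb j) * (hess D zb z U)⁻¹ * (covDeriv D zb z U (z i))ᵀ)
      - contraction (hess D zb z U)⁻¹ (of fun i j =>
        covDeriv D z zb U (z i) * (hess D zb z U)⁻¹ * (covDeriv D zb z U (zb j))ᵀ) := by
  rw [kahlerLaplacian, hessSchur]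
  simp only [map_derivation_map_derivation_schur _ _ hG, covDeriv_transpose hD]
  simp only [kahlerLaplacian, mul_contraction, contraction_mul, ← map_sub, ← map_add]
  rfl

lemma contraction_map_kahlerLaplacian {F : Type*} [FunLike F R k] [AlgHomClass F k R k] (φ : F)
    (W : Matrix ι ι k) (X : Matrix ι ι R) :
    contraction W ((kahlerLaplacian D z zb U X).map φ) =
      contraction ((hess D zb z U)⁻¹.map φ)
        (of fun i j => φ (D (z i) (D (zb j) (contraction W X)))) := by
  have commute (i j : ι) : φ (D (z i) (D (zb j) (contraction W X))) =
      contraction W (((X.map (D (zb j))).map (D (z i))).map φ) := by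
    rw [← Derivation.coeFn_coe (D (zb j)), map_contraction, ← Derivation.coeFn_coe (D (z i)),
      map_contraction, map_contraction φ]
  rw [kahlerLaplacian, contraction_map_ringHom φ, map_contraction]
  simp only [commute]
  rfl

lemma covDeriv_conjTranspose [StarRing R] (hD : ∀ a b F, D a (D b F) = D b (D a F))
    (hz : ∀ i F, star (D (z i) F) = D (zb i) (star F)) (hU : star U = U) (j : ι) :
    (covDeriv D z zb U (z j))ᴴ = (covDeriv D zb z U (zb j))ᵀ := by
  have hzb (i : ι) (F : R) : star (D (zb i) F) = D (z i) (star F) := by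
    rw [← star_star F, ← hz, star_star, star_star]
  have map_conj (X : Matrix ι ι R) : (X.map (D (z j)))ᴴ = Xᴴ.map (D (zb j)) := by
    ext p q
    exact hz j _
  have hess_zz : (hess D z z U)ᴴ = hess D zb zb U := by
    rw [conjTranspose, hess_transpose hD, hess_map_star hz hz, hU]
  have hess_zbz : (hess D zb z U)ᴴ = hess D zb z U := by
    rw [conjTranspose, hess_transpose hD, hess_map_star hz hzb, hU]
  rw [covDeriv_transpose hD, covDeriv, conjTranspose_sub, conjTranspose_mul, conjTranspose_mul,
    conjTranspose_nonsing_inv, map_conj, map_conj, hess_zz, hess_zbz]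

namespace IsKahlerEinsteinPotential

lemma trace_inv_mul (hU : IsKahlerEinsteinPotential D z zb c U) (a : κ) :
    ((hess D z zb U)⁻¹ * (hess D z zb U).map (D a)).trace = c • D a U := by
  obtain ⟨d, hd⟩ := hU.isUnit_det
  have jacobi := derivation_det (D a) (hess D z zb U)
  rw [hU.map_det, ← hd] at jacobi
  rw [Matrix.inv_def, ← hd, Ring.inverse_unit, Matrix.smul_mul, trace_smul, ← jacobi, smul_eq_mul,
    mul_smul_comm, Units.inv_mul_cancel_left]

lemma trace_inv_mul_map_map (hU : IsKahlerEinsteinPotential D z zb c U) (a b : κ) :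
    ((hess D z zb U)⁻¹ * ((hess D z zb U).map (D b)).map (D a)).trace = c • D a (D b U) +
      ((hess D z zb U)⁻¹ * ((hess D z zb U).map (D b) * (hess D z zb U)⁻¹ *
        (hess D z zb U).map (D a))).trace := by
  have cyclic : ((hess D z zb U)⁻¹ * (hess D z zb U).map (D a) * (hess D z zb U)⁻¹ *
      (hess D z zb U).map (D b)).trace = ((hess D z zb U)⁻¹ * ((hess D z zb U).map (D b) *
        (hess D z zb U)⁻¹ * (hess D z zb U).map (D a))).trace := by
    rw [Matrix.mul_assoc, trace_mul_comm]
    simp only [Matrix.mul_assoc]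
  have differentiated := congrArg (D a) (hU.trace_inv_mul b)
  rw [Derivation.map_smul, AddMonoidHom.map_trace (D a), map_derivation_mul,
    map_derivation_inv _ hU.isUnit_det, trace_add, Matrix.neg_mul, trace_neg,
    cyclic] at differentiated
  rw [← differentiated, neg_add_eq_sub, sub_add_cancel]

/- The trace identity for the directions `e p` and `f q`, with the derivations commuted so that all
third and fourth derivatives of `U` become derivatives of Hessians along `e` and `f`. -/
lemma kahlerLaplacian_hess (hU : IsKahlerEinsteinPotential D z zb c U)
    (hD : ∀ a b F, D a (D b F) = D b (D a F)) (e f : ι → κ) :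
    kahlerLaplacian D z zb U (hess D e f U) = c • hess D e f U +
      contraction (hess D zb z U)⁻¹ (of fun i j =>
        (hess D e z U).map (D (zb j)) * (hess D zb z U)⁻¹ * (hess D zb f U).map (D (z i))) := by
  ext p q
  let A := hess D z zb U
  have fourth : kahlerLaplacian D z zb U (hess D e f U) p q =
      contraction (hess D zb z U)⁻¹ ((A.map (D (f q))).map (D (e p))) := by
    rw [kahlerLaplacian, contraction_entry]
    congr 1
    ext i j
    change D (z i) (D (zb j) (D (e p) (D (f q) U))) = D (e p) (D (f q) (D (z i) (D (zb j) U)))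
    rw [hD (f q) (z i), hD (f q) (zb j), hD (e p) (z i), hD (e p) (zb j)]
  have third : (of fun i j => (hess D e z U).map (D (zb j)) * (hess D zb z U)⁻¹ *
      (hess D zb f U).map (D (z i))).map (fun Y => Y p q) =
      A.map (D (f q)) * A⁻¹ * A.map (D (e p)) := by
    ext i j
    rw [map_apply, of_apply]
    simp only [mul_apply, Finset.sum_mul]
    rw [Finset.sum_comm]
    refine Finset.sum_congr rfl fun r _ => Finset.sum_congr rfl fun l _ => ?_
    rw [← hess_inv_transpose hD]
    change D (zb j) (D (e p) (D (z r) U)) * A⁻¹ l r * D (z i) (D (zb l) (D (f q) U)) =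
      D (f q) (D (z i) (D (zb l) U)) * A⁻¹ l r * D (e p) (D (z r) (D (zb j) U))
    rw [hD (f q) (z i), hD (f q), hD (zb j) (e p), hD (zb j) (z r)]
    ring
  have differentiated := hU.trace_inv_mul_map_map (e p) (f q)
  rw [trace_mul_eq_contraction, trace_mul_eq_contraction, hess_inv_transpose hD] at differentiated
  rw [fourth, differentiated, ← third, Matrix.add_apply, contraction_entry]
  rfl

lemma kahlerLaplacian_twist_hess (hU : IsKahlerEinsteinPotential D z zb c U)
    (hD : ∀ a b F, D a (D b F) = D b (D a F)) :
    kahlerLaplacian D z zb U (hess D z zb U)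
        - kahlerLaplacian D z zb U (hess D z z U) * ((hess D zb z U)⁻¹ * hess D zb zb U)
        - hess D z z U * (hess D zb z U)⁻¹ * kahlerLaplacian D z zb U (hess D zb zb U)
        + hess D z z U * (hess D zb z U)⁻¹ * kahlerLaplacian D z zb U (hess D zb z U) *
          ((hess D zb z U)⁻¹ * hess D zb zb U) =
      c • hessSchur D z zb U + contraction (hess D zb z U)⁻¹ (of fun i j =>
        covDeriv D z zb U (zb j) * (hess D zb z U)⁻¹ * (covDeriv D zb z U (z i))ᵀ) := by
  have scalar : c • hessSchur D z zb U = c • hess D z zb U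
      - c • hess D z z U * ((hess D zb z U)⁻¹ * hess D zb zb U)
      - hess D z z U * (hess D zb z U)⁻¹ * c • hess D zb zb U
      + hess D z z U * (hess D zb z U)⁻¹ * c • hess D zb z U *
        ((hess D zb z U)⁻¹ * hess D zb zb U) := by
    rw [Matrix.mul_smul _ c (hess D zb z U),
      nonsing_inv_mul_cancel_right _ _ (isUnit_det_hess_swap hD hU.isUnit_det), hessSchur,
      smul_sub, smul_mul_assoc, mul_smul_comm, Matrix.mul_assoc, sub_add_cancel]
  rw [scalar, hU.kahlerLaplacian_hess hD z zb, hU.kahlerLaplacian_hess hD z z,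
    hU.kahlerLaplacian_hess hD zb zb, hU.kahlerLaplacian_hess hD zb z]
  simp only [Matrix.mul_add, Matrix.add_mul]
  rw [add_sub_add_comm, add_sub_add_comm, add_add_add_comm]
  simp only [mul_contraction, contraction_mul, ← map_sub, ← map_add]
  refine congrArg (_ + contraction _ ·) (Matrix.ext fun i j => ?_)
  rw [of_apply, covDeriv_transpose hD, covDeriv]
  simp only [Matrix.add_apply, Matrix.sub_apply, of_apply]
  simp only [Matrix.sub_mul, Matrix.mul_sub, Matrix.mul_assoc]
  abel

lemma kahlerLaplacian_hessSchur [StarRing R] (hU : IsKahlerEinsteinPotential D z zb c U)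
    (hD : ∀ a b F, D a (D b F) = D b (D a F))
    (hz : ∀ i F, star (D (z i) F) = D (zb i) (star F)) (hreal : star U = U) :
    kahlerLaplacian D z zb U (hessSchur D z zb U) = c • hessSchur D z zb U -
      contraction (hess D zb z U)⁻¹ (of fun i j =>
        covDeriv D z zb U (z i) * (hess D zb z U)⁻¹ * (covDeriv D z zb U (z j))ᴴ) := by
  rw [kahlerLaplacian_hessSchur_expand (isUnit_det_hess_swap hD hU.isUnit_det) hD,
    hU.kahlerLaplacian_twist_hess hD, add_sub_cancel_right]
  simp only [covDeriv_conjTranspose hD hz hreal]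

end IsKahlerEinsteinPotential

end CommutingDerivations

section Evaluation

variable {R κ ι : Type*} [CommRing R] [StarRing R] [Algebra ℂ R] [Fintype ι] [DecidableEq ι]
  {D : κ → Derivation ℂ R R} {z zb : ι → κ} {c : ℂ} {U : R}

lemma IsKahlerEinsteinPotential.contraction_hessSchur_le (φ : R →⋆ₐ[ℂ] ℂ)
    (hU : IsKahlerEinsteinPotential D z zb c U) (hD : ∀ a b F, D a (D b F) = D b (D a F))
    (hz : ∀ i F, star (D (z i) F) = D (zb i) (star F)) (hreal : star U = U)
    (hpos : ((hess D zb z U)⁻¹.map φ).PosSemidef) (s : ι → ℂ) :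
    contraction ((hess D zb z U)⁻¹.map φ) (of fun i j =>
        φ (D (z i) (D (zb j) (contraction (vecMulVec s (star s)) (hessSchur D z zb U))))) ≤
      c * φ (contraction (vecMulVec s (star s)) (hessSchur D z zb U)) := by
  let E (i : ι) : Matrix ι ι ℂ := (covDeriv D z zb U (z i)).map φ
  have evaluated : (kahlerLaplacian D z zb U (hessSchur D z zb U)).map φ =
      c • (hessSchur D z zb U).map φ - contraction ((hess D zb z U)⁻¹.map φ)
        (of fun i j => E i * (hess D zb z U)⁻¹.map φ * (E j)ᴴ) := by
    have conjugate (j : ι) : (covDeriv D z zb U (z j))ᴴ.map φ = (E j)ᴴ :=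
      conjTranspose_map φ (map_star φ)
    rw [hU.kahlerLaplacian_hessSchur hD hz hreal, Matrix.map_sub φ (map_sub φ),
      Matrix.map_smul φ c (map_smul φ c), contraction_map_ringHom φ]
    refine congrArg (_ - contraction _ ·) (Matrix.ext fun i j => ?_)
    simp only [map_apply, of_apply, Matrix.map_mul, conjugate, E]
  rw [← contraction_map_kahlerLaplacian, evaluated, map_sub, map_smul, map_contraction φ,
    smul_eq_mul]
  exact sub_le_self _
    (contraction_vecMulVec_star_nonneg (posSemidef_contraction_conj hpos hpos E) s)

end Evaluation

section ComplexifiedDerivative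

variable {E : Type*} [NormedAddCommGroup E] [NormedSpace ℝ E]

/-- The derivative of a complex-valued function along the complexified direction `d.1 + I d.2`. For
suitable `d` it is one of the Wirtinger derivatives, which are thereby treated uniformly. -/
def wirtinger (d : E × E) (f : E → ℂ) (z : E) : ℂ :=
  fderiv ℝ f z d.1 + I * fderiv ℝ f z d.2

variable {d e : E × E} {f g : E → ℂ} {z : E} {s : Set E}

lemma contDiffOn_wirtinger (hs : IsOpen s) (hf : ContDiffOn ℝ (⊤ : ℕ∞) f s) :
    ContDiffOn ℝ (⊤ : ℕ∞) (wirtinger d f) s := by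
  have smooth_fderiv : ContDiffOn ℝ (⊤ : ℕ∞) (fderiv ℝ f) s := hf.fderiv_of_isOpen hs (by simp)
  exact (smooth_fderiv.clm_apply contDiffOn_const).add
    (contDiffOn_const.mul (smooth_fderiv.clm_apply contDiffOn_const))

lemma wirtinger_congr (hs : IsOpen s) (hfg : s.EqOn f g) (hz : z ∈ s) :
    wirtinger d f z = wirtinger d g z := by
  rw [wirtinger, (hfg.eventuallyEq_of_mem (hs.mem_nhds hz)).fderiv_eq, wirtinger]

lemma wirtinger_add (hf : DifferentiableAt ℝ f z) (hg : DifferentiableAt ℝ g z) :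
    wirtinger d (f + g) z = wirtinger d f z + wirtinger d g z := by
  simp only [wirtinger, fderiv_add hf hg, _root_.add_apply]
  ring

lemma wirtinger_const_smul (hf : DifferentiableAt ℝ f z) (c : ℂ) :
    wirtinger d (c • f) z = c • wirtinger d f z := by
  simp only [wirtinger, fderiv_const_smul hf, _root_.smul_apply, smul_eq_mul]
  ring

lemma wirtinger_mul (hf : DifferentiableAt ℝ f z) (hg : DifferentiableAt ℝ g z) :
    wirtinger d (f * g) z = f z * wirtinger d g z + g z * wirtinger d f z := by
  simp only [wirtinger, fderiv_mul hf hg, _root_.add_apply, _root_.smul_apply, smul_eq_mul]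
  ring

lemma wirtinger_cexp (hf : DifferentiableAt ℝ f z) :
    wirtinger d (fun w => exp (f w)) z = exp (f z) * wirtinger d f z := by
  simp only [wirtinger, hf.hasFDerivAt.cexp.fderiv, _root_.smul_apply, smul_eq_mul]
  ring

lemma star_wirtinger : star (wirtinger d f z) = wirtinger (d.1, -d.2) (star f) z := by
  have fderiv_star : fderiv ℝ (star f) z = (conjCLE : ℂ →L[ℝ] ℂ).comp (fderiv ℝ f z) :=
    conjCLE.comp_fderiv
  simp [wirtinger, fderiv_star]

lemma wirtinger_comm (hf : ContDiffAt ℝ 2 f z) :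
    wirtinger d (wirtinger e f) z = wirtinger e (wirtinger d f) z := by
  have symmetric : IsSymmSndFDerivAt ℝ f z := hf.isSymmSndFDerivAt (by simp)
  have differentiable : DifferentiableAt ℝ (fderiv ℝ f) z :=
    (hf.fderiv_right (m := 1) le_rfl).differentiableAt one_ne_zero
  have fderiv_wirtinger (c : E × E) (v : E) : fderiv ℝ (wirtinger c f) z v =
      fderiv ℝ (fderiv ℝ f) z v c.1 + I * fderiv ℝ (fderiv ℝ f) z v c.2 := by
    have slot (x : E) : HasFDerivAt (fun w => fderiv ℝ f w x)
        ((fderiv ℝ (fderiv ℝ f) z).flip x) z := by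
      simpa using differentiable.hasFDerivAt.clm_apply (hasFDerivAt_const x z)
    have := ((slot c.1).add ((slot c.2).const_mul I)).fderiv
    exact congrArg (· v) this
  simp only [wirtinger] at fderiv_wirtinger ⊢
  rw [fderiv_wirtinger, fderiv_wirtinger, fderiv_wirtinger, fderiv_wirtinger, symmetric.eq d.1 e.1,
    symmetric.eq d.1 e.2, symmetric.eq d.2 e.1, symmetric.eq d.2 e.2]
  ring

end ComplexifiedDerivative

section SmoothFunctions

variable {E : Type*} [NormedAddCommGroup E] {Ω : TopologicalSpace.Opens E}

/-- The function on `E` that agrees with `F` on the open set `Ω` and vanishes elsewhere, through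
which functions on `Ω` are differentiated. -/
def zeroExtend (F : Ω → ℂ) : E → ℂ := Function.extend (↑) F 0

lemma zeroExtend_coe (F : Ω → ℂ) (w : Ω) : zeroExtend F w = F w :=
  Subtype.val_injective.extend_apply F 0 w

lemma eqOn_zeroExtend {F : Ω → ℂ} {g : E → ℂ} (h : ∀ w : Ω, F w = g w) :
    Set.EqOn (zeroExtend F) g Ω := fun w hw => (zeroExtend_coe F ⟨w, hw⟩).trans (h ⟨w, hw⟩)

variable [NormedSpace ℝ E]

lemma contDiffOn_zeroExtend {F : Ω → ℂ} {g : E → ℂ} (h : ∀ w : Ω, F w = g w)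
    (hg : ContDiffOn ℝ (⊤ : ℕ∞) g Ω) : ContDiffOn ℝ (⊤ : ℕ∞) (zeroExtend F) Ω :=
  hg.congr (eqOn_zeroExtend h)

variable (Ω) in
/-- The `*`-algebra of smooth complex-valued functions on `Ω`. -/
def smoothFunctions : StarSubalgebra ℂ (Ω → ℂ) where
  carrier := {F | ContDiffOn ℝ (⊤ : ℕ∞) (zeroExtend F) Ω}
  mul_mem' {F G} hF hG := contDiffOn_zeroExtend (g := zeroExtend F * zeroExtend G)
    (fun w => by simp only [Pi.mul_apply, zeroExtend_coe]) (hF.mul hG)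
  add_mem' {F G} hF hG := contDiffOn_zeroExtend (g := zeroExtend F + zeroExtend G)
    (fun w => by simp only [Pi.add_apply, zeroExtend_coe]) (hF.add hG)
  algebraMap_mem' c := contDiffOn_zeroExtend (g := fun _ => c) (fun _ => rfl) contDiffOn_const
  star_mem' {F} hF := contDiffOn_zeroExtend (g := star (zeroExtend F))
    (fun w => by simp only [Pi.star_apply, zeroExtend_coe]) (conjCLE.contDiff.comp_contDiffOn hF)

lemma differentiableAt_zeroExtend (F : smoothFunctions Ω) (w : Ω) :
    DifferentiableAt ℝ (zeroExtend (F : Ω → ℂ)) w :=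
  (F.2.contDiffAt (Ω.isOpen.mem_nhds w.2)).differentiableAt (by simp)

/-- Evaluation at a point of `Ω`. -/
def evalAt (w : Ω) : smoothFunctions Ω →⋆ₐ[ℂ] ℂ :=
  (Pi.evalStarAlgHom ℂ (fun _ : Ω => ℂ) w).comp (smoothFunctions Ω).subtype

lemma smoothFunctions_ext {F G : smoothFunctions Ω} (h : ∀ w, evalAt w F = evalAt w G) : F = G :=
  Subtype.ext (funext h)

lemma isUnit_of_evalAt_ne_zero {F : smoothFunctions Ω} (hF : ∀ w, evalAt w F ≠ 0) : IsUnit F := by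
  refine IsUnit.of_mul_eq_one ⟨fun w => (evalAt w F)⁻¹, ?_⟩
    (smoothFunctions_ext fun w => mul_inv_cancel₀ (hF w))
  refine contDiffOn_zeroExtend (g := fun w => (zeroExtend (F : Ω → ℂ) w)⁻¹)
    (fun w => congrArg _ (zeroExtend_coe _ w).symm) (F.2.inv fun w hw => ?_)
  exact (zeroExtend_coe _ ⟨w, hw⟩).trans_ne (hF ⟨w, hw⟩)

lemma wirtinger_zeroExtend {F : Ω → ℂ} {g : E → ℂ} (h : ∀ w : Ω, F w = g w) (d : E × E) (w : Ω) :
    wirtinger d (zeroExtend F) w = wirtinger d g w :=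
  wirtinger_congr Ω.isOpen (eqOn_zeroExtend h) w.2

/-- `wirtinger d` as a derivation of the algebra of smooth functions. -/
def smoothDerivation (d : E × E) : Derivation ℂ (smoothFunctions Ω) (smoothFunctions Ω) :=
  Derivation.mk'
    { toFun F := ⟨fun w => wirtinger d (zeroExtend (F : Ω → ℂ)) w,
        contDiffOn_zeroExtend (fun _ => rfl) (contDiffOn_wirtinger Ω.isOpen F.2)⟩
      map_add' F G := smoothFunctions_ext fun w =>
        (wirtinger_zeroExtend (fun w => by simp [zeroExtend_coe]) d w).trans
          (wirtinger_add (differentiableAt_zeroExtend F w) (differentiableAt_zeroExtend G w))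
      map_smul' c F := smoothFunctions_ext fun w =>
        (wirtinger_zeroExtend (fun w => by simp [zeroExtend_coe]) d w).trans
          (wirtinger_const_smul (differentiableAt_zeroExtend F w) c) }
    fun F G => smoothFunctions_ext fun w => by
      refine (wirtinger_zeroExtend (g := zeroExtend (F : Ω → ℂ) * zeroExtend (G : Ω → ℂ))
        (fun w => by simp [zeroExtend_coe]) d w).trans ?_
      rw [wirtinger_mul (differentiableAt_zeroExtend F w) (differentiableAt_zeroExtend G w),
        zeroExtend_coe, zeroExtend_coe]
      rfl

lemma evalAt_smoothDerivation {F : smoothFunctions Ω} {g : E → ℂ} (h : ∀ w : Ω, evalAt w F = g w)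
    (d : E × E) (w : Ω) : evalAt w (smoothDerivation d F) = wirtinger d g w :=
  wirtinger_zeroExtend h d w

lemma smoothDerivation_comm (d e : E × E) (F : smoothFunctions Ω) :
    smoothDerivation d (smoothDerivation e F) = smoothDerivation e (smoothDerivation d F) := by
  refine smoothFunctions_ext fun w => ?_
  rw [evalAt_smoothDerivation (g := wirtinger e (zeroExtend (F : Ω → ℂ))) (fun _ => rfl),
    evalAt_smoothDerivation (g := wirtinger d (zeroExtend (F : Ω → ℂ))) (fun _ => rfl)]
  have smooth := F.2.contDiffAt (Ω.isOpen.mem_nhds w.2)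
  exact wirtinger_comm (smooth.of_le (WithTop.coe_le_coe.2 le_top))

lemma star_smoothDerivation (d : E × E) (F : smoothFunctions Ω) :
    star (smoothDerivation d F) = smoothDerivation (d.1, -d.2) (star F) := by
  refine smoothFunctions_ext fun w => ?_
  rw [map_star, evalAt_smoothDerivation (fun w => (zeroExtend_coe _ w).symm), star_wirtinger]
  exact (evalAt_smoothDerivation (fun w => congrArg star (zeroExtend_coe _ w).symm) _ w).symm

end SmoothFunctions

section Wirtinger

variable {n : ℕ}

/-- The complexified direction of `∂/∂z_j`. -/
def holDir (j : Fin n) : (Fin n → ℂ) × (Fin n → ℂ) :=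
  ((1 / 2 : ℝ) • Pi.single j 1, -((1 / 2 : ℝ) • Pi.single j I))

/-- The complexified direction of `∂/∂z̄_j`. -/
def antiholDir (j : Fin n) : (Fin n → ℂ) × (Fin n → ℂ) :=
  ((1 / 2 : ℝ) • Pi.single j 1, (1 / 2 : ℝ) • Pi.single j I)

lemma wdz_eq_wirtinger (f : (Fin n → ℂ) → ℂ) (j : Fin n) : wdz f j = wirtinger (holDir j) f := by
  funext z
  simp only [wdz, wirtinger, holDir, map_smul, map_neg, real_smul]
  push_cast
  ring

lemma wdzbar_eq_wirtinger (f : (Fin n → ℂ) → ℂ) (j : Fin n) :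
    wdzbar f j = wirtinger (antiholDir j) f := by
  funext z
  simp only [wdzbar, wirtinger, antiholDir, map_smul, real_smul]
  push_cast
  ring

variable {Ω : TopologicalSpace.Opens (Fin n → ℂ)}

lemma evalAt_smoothDerivation_holDir_antiholDir {F : smoothFunctions Ω} {f : (Fin n → ℂ) → ℂ}
    (h : ∀ w : Ω, evalAt w F = f w) (i j : Fin n) (w : Ω) :
    evalAt w (smoothDerivation (holDir i) (smoothDerivation (antiholDir j) F)) =
      wdz (wdzbar f j) i w := by
  rw [evalAt_smoothDerivation (evalAt_smoothDerivation h _), wdz_eq_wirtinger, wdzbar_eq_wirtinger]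

lemma star_smoothDerivation_holDir (i : Fin n) (F : smoothFunctions Ω) :
    star (smoothDerivation (holDir i) F) = smoothDerivation (antiholDir i) (star F) := by
  rw [star_smoothDerivation, holDir, neg_neg, antiholDir]

lemma star_smoothDerivation_antiholDir (i : Fin n) (F : smoothFunctions Ω) :
    star (smoothDerivation (antiholDir i) F) = smoothDerivation (holDir i) (star F) :=
  star_smoothDerivation _ F

variable {u : (Fin n → ℂ) → ℝ} (hu : ContDiffOn ℝ (⊤ : ℕ∞) u Ω)

/-- The potential `u` as an element of the algebra of smooth functions on `Ω`. -/
def smoothPotential : smoothFunctions Ω :=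
  ⟨fun w => cplx u w, contDiffOn_zeroExtend (fun _ => rfl) (ofRealCLM.contDiff.comp_contDiffOn hu)⟩

lemma star_smoothPotential : star (smoothPotential hu) = smoothPotential hu :=
  smoothFunctions_ext fun w => conj_ofReal (u w)

lemma hess_holDir_antiholDir_map_evalAt (w : Ω) :
    (hess smoothDerivation holDir antiholDir (smoothPotential hu)).map (evalAt w) = hessA u w := by
  ext p q
  exact evalAt_smoothDerivation_holDir_antiholDir (fun _ => rfl) p q w

lemma hess_holDir_map_evalAt (w : Ω) :
    (hess smoothDerivation holDir holDir (smoothPotential hu)).map (evalAt w) = hessB u w := by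
  ext p q
  rw [hessB, of_apply, wdz_eq_wirtinger, wdz_eq_wirtinger]
  exact evalAt_smoothDerivation (evalAt_smoothDerivation (fun _ => rfl) _) _ _

lemma hess_antiholDir_holDir_map_evalAt (w : Ω) :
    (hess smoothDerivation antiholDir holDir (smoothPotential hu)).map (evalAt w) =
      mconj (hessA u w) := by
  rw [← star_smoothPotential hu,
    ← hess_map_star star_smoothDerivation_holDir star_smoothDerivation_antiholDir,
    ← hess_holDir_antiholDir_map_evalAt hu w]
  ext p q
  exact map_star (evalAt w) _

lemma hess_antiholDir_map_evalAt (w : Ω) :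
    (hess smoothDerivation antiholDir antiholDir (smoothPotential hu)).map (evalAt w) =
      mconj (hessB u w) := by
  rw [← star_smoothPotential hu,
    ← hess_map_star star_smoothDerivation_holDir star_smoothDerivation_holDir,
    ← hess_holDir_map_evalAt hu w]
  ext p q
  exact map_star (evalAt w) _

variable {hu}

lemma isKahlerEinsteinPotential_smoothPotential {c : ℝ}
    (hKE : ∀ z ∈ Ω, (hessA u z).det = (Real.exp (c * u z) : ℂ)) :
    IsKahlerEinsteinPotential smoothDerivation holDir antiholDir (c : ℂ) (smoothPotential hu) := by
  have evalAt_det (w : Ω) :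
      evalAt w (hess smoothDerivation holDir antiholDir (smoothPotential hu)).det =
        exp (((c : ℂ) • cplx u) w) := by
    have map_det := RingHom.map_det (evalAt w : smoothFunctions Ω →+* ℂ)
      (hess smoothDerivation holDir antiholDir (smoothPotential hu))
    have map_hess := congrArg det (hess_holDir_antiholDir_map_evalAt hu w)
    refine map_det.trans (map_hess.trans ((hKE w w.2).trans ?_))
    simp only [cplx, ofReal_exp, ofReal_mul, Pi.smul_apply, smul_eq_mul]
  refine ⟨isUnit_of_evalAt_ne_zero fun w => (evalAt_det w).trans_ne (exp_ne_zero _),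
    fun d => smoothFunctions_ext fun w => ?_⟩
  have differentiable : DifferentiableAt ℝ (cplx u) w :=
    (ofRealCLM.contDiff.comp_contDiffOn hu).contDiffAt (Ω.isOpen.mem_nhds w.2)
      |>.differentiableAt (by simp)
  rw [evalAt_smoothDerivation (g := fun z => exp (((c : ℂ) • cplx u) z)) evalAt_det,
    wirtinger_cexp (differentiable.const_smul _), wirtinger_const_smul differentiable,
    map_smul, map_mul, evalAt_det, evalAt_smoothDerivation (g := cplx u) (fun _ => rfl),
    mul_smul_comm]

lemma hessSchur_map_evalAt
    (hA : IsUnit (hess smoothDerivation holDir antiholDir (smoothPotential hu)).det) (w : Ω) :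
    (hessSchur smoothDerivation holDir antiholDir (smoothPotential hu)).map (evalAt w) =
      hessA u w - hessB u w * (mconj (hessA u w))⁻¹ * mconj (hessB u w) := by
  rw [hessSchur, Matrix.map_sub _ (map_sub _), Matrix.map_mul, Matrix.map_mul,
    map_inv_of_isUnit_det _ (isUnit_det_hess_swap smoothDerivation_comm hA),
    hess_holDir_antiholDir_map_evalAt, hess_holDir_map_evalAt, hess_antiholDir_holDir_map_evalAt,
    hess_antiholDir_map_evalAt]

lemma hess_inv_map_evalAt
    (hA : IsUnit (hess smoothDerivation holDir antiholDir (smoothPotential hu)).det) (w : Ω) :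
    (hess smoothDerivation antiholDir holDir (smoothPotential hu))⁻¹.map (evalAt w) =
      of (uInv u w) := by
  rw [← hess_inv_transpose smoothDerivation_comm, transpose_map,
    map_inv_of_isUnit_det _ hA, hess_holDir_antiholDir_map_evalAt]
  rfl

/-- The function `m = ∑ M_{pq̄} s^p \bar{s^q}` for `M = A - B Ā⁻¹ B̄`. -/
def scalarM (u : (Fin n → ℂ) → ℝ) (s z : Fin n → ℂ) : ℂ :=
  ∑ p, ∑ q, (hessA u z - hessB u z * (mconj (hessA u z))⁻¹ * mconj (hessB u z)) p q *
    s p * (starRingEnd ℂ) (s q)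

lemma evalAt_contraction_hessSchur
    (hA : IsUnit (hess smoothDerivation holDir antiholDir (smoothPotential hu)).det)
    (s : Fin n → ℂ) (w : Ω) :
    evalAt w (contraction (vecMulVec s (star s))
      (hessSchur smoothDerivation holDir antiholDir (smoothPotential hu))) = scalarM u s w := by
  rw [map_contraction, hessSchur_map_evalAt hA, contraction_apply]
  refine Finset.sum_congr rfl fun p _ => Finset.sum_congr rfl fun q _ => ?_
  rw [vecMulVec_apply, smul_eq_mul, mul_comm, ← mul_assoc]
  rfl

end Wirtinger

theorem scalar_m_differential_inequality_general {n : ℕ} {Ω : Set (Fin n → ℂ)} (hΩ : IsOpen Ω)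
    {u : (Fin n → ℂ) → ℝ} (hu : ContDiffOn ℝ (⊤ : ℕ∞) u Ω)
    (hpsh : ∀ z ∈ Ω, (hessA u z).PosDef) {c : ℝ}
    (hKE : ∀ z ∈ Ω, (hessA u z).det = (Real.exp (c * u z) : ℂ)) (s : Fin n → ℂ)
    {z : Fin n → ℂ} (hz : z ∈ Ω) :
    ∑ i, ∑ j, uInv u z i j * wdz (wdzbar (scalarM u s) j) i z ≤ (c : ℂ) * scalarM u s z := by
  let w : (⟨Ω, hΩ⟩ : TopologicalSpace.Opens (Fin n → ℂ)) := ⟨z, hz⟩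
  have hU := isKahlerEinsteinPotential_smoothPotential (Ω := ⟨Ω, hΩ⟩) (hu := hu) hKE
  have hpos : (of (uInv u w)).PosSemidef := (hpsh z hz).inv.transpose.posSemidef
  rw [← hess_inv_map_evalAt hU.isUnit_det] at hpos
  have inequality := hU.contraction_hessSchur_le (evalAt w) smoothDerivation_comm
    star_smoothDerivation_holDir (star_smoothPotential hu) hpos s
  simp only [hess_inv_map_evalAt hU.isUnit_det, evalAt_contraction_hessSchur hU.isUnit_det,
    evalAt_smoothDerivation_holDir_antiholDir (f := scalarM u s)
      (evalAt_contraction_hessSchur hU.isUnit_det s)] at inequality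
  exact inequality

theorem scalar_m_differential_inequality (n : ℕ) (Ω : Set (Fin n → ℂ)) (hΩ : IsOpen Ω)
    (u : (Fin n → ℂ) → ℝ) (hu : ContDiffOn ℝ (⊤ : ℕ∞) u Ω)
    (hpsh : ∀ z ∈ Ω, (hessA u z).PosDef)
    (hKE : ∀ z ∈ Ω, (hessA u z).det = (Real.exp ((n + 1) * u z) : ℂ)) (s : Fin n → ℂ) :
    ∀ z ∈ Ω,
      ∑ i, ∑ j, uInv u z i j *
          wdz (wdzbar (fun w => ∑ p, ∑ q,
            (hessA u w - hessB u w * (mconj (hessA u w))⁻¹ * mconj (hessB u w)) p q *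
              s p * (starRingEnd ℂ) (s q)) j) i z
        ≤ ((n : ℂ) + 1) *
            ∑ p, ∑ q,
              (hessA u z - hessB u z * (mconj (hessA u z))⁻¹ * mconj (hessB u z)) p q *
                s p * (starRingEnd ℂ) (s q) := by
  intro z hz
  exact (scalar_m_differential_inequality_general hΩ hu hpsh hKE s hz).trans_eq
    (by rw [ofReal_add, ofReal_natCast, ofReal_one]; rfl)

end
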